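/- (Jacobi's triple product identity) For all complex numbers q and z with |q| < 1 and z ≠ 0, ∑_{k=-∞}^{∞} q^{k²} z^k = (q²;q²)_∞ (-qz;q²)_∞ (-q/z;q²)_∞. -/

import Mathlib

/-- The infinite q-shifted factorial `(a;q)_∞ = ∏_{k=0}^∞ (1 - a q^k)`. -/
noncomputable def qPochInf (a q : ℂ) : ℂ := ∏' k : ℕ, (1 - a * q ^ k)

/-!
The `q`-Pascal rule gives a finite form of the identity,
`(-qz;q²)_a (-q/z;q²)_b = ∑_{k=-b}^a [a+b, b+k]_{q²} q^{k²} z^k`: for `b = 0` it is the `q`-binomial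
theorem, and one more application of the rule raises `b` by one. For `a = b = n → ∞` each Gaussian
binomial `[2n, n+k]_{q²}` tends to `1 / (q²;q²)_∞`, and these coefficients are uniformly bounded, so
dominated convergence yields the triple product.
-/

open Filter Finset Topology

section GaussBinom

variable {R : Type*}

/-- The Gaussian binomial coefficient `[n, k]_p`, defined by the `p`-Pascal rule so that it makes
sense over any semiring; it is `0` for `k > n`. -/
def gaussBinom [Semiring R] (p : R) : ℕ → ℕ → R
  | _, 0 => 1
  | 0, _ + 1 => 0
  | n + 1, k + 1 => p ^ (k + 1) * gaussBinom p n (k + 1) + gaussBinom p n k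

@[simp]
lemma gaussBinom_zero_right [Semiring R] (p : R) (n : ℕ) : gaussBinom p n 0 = 1 := by
  cases n <;> rfl

lemma gaussBinom_succ_succ [Semiring R] (p : R) (n k : ℕ) :
    gaussBinom p (n + 1) (k + 1) = p ^ (k + 1) * gaussBinom p n (k + 1) + gaussBinom p n k :=
  rfl

lemma gaussBinom_eq_zero_of_lt [Semiring R] (p : R) {n k : ℕ} (h : n < k) :
    gaussBinom p n k = 0 := by
  induction n generalizing k with
  | zero =>
    obtain ⟨k, rfl⟩ := Nat.exists_eq_succ_of_ne_zero h.ne'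
    rfl
  | succ n ih =>
    obtain ⟨k, rfl⟩ := Nat.exists_eq_succ_of_ne_zero (Nat.ne_zero_of_lt h)
    rw [Nat.succ_eq_add_one, gaussBinom_succ_succ, ih (by lia), ih (by lia), mul_zero, add_zero]

@[simp]
lemma gaussBinom_self [Semiring R] (p : R) (n : ℕ) : gaussBinom p n n = 1 := by
  induction n with
  | zero => rfl
  | succ n ih =>
    rw [gaussBinom_succ_succ, ih, gaussBinom_eq_zero_of_lt p n.lt_succ_self, mul_zero, zero_add]

lemma sum_gaussBinom_succ_mul [CommSemiring R] (p : R) (n : ℕ) (f : ℕ → R) :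
    ∑ k ∈ range (n + 2), gaussBinom p (n + 1) k * f k =
      ∑ k ∈ range (n + 1), gaussBinom p n k * (p ^ k * f k + f (k + 1)) := by
  have shift : ∑ k ∈ range (n + 1), gaussBinom p n k * (p ^ k * f k) =
      ∑ k ∈ range (n + 1), gaussBinom p n (k + 1) * (p ^ (k + 1) * f (k + 1)) + f 0 := by
    have h := sum_range_succ' (fun k ↦ gaussBinom p n k * (p ^ k * f k)) (n + 1)
    simpa [sum_range_succ _ (n + 1), gaussBinom_eq_zero_of_lt p n.lt_succ_self] using h
  simp_rw [mul_add, sum_add_distrib]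
  rw [shift, sum_range_succ', gaussBinom_zero_right, one_mul, add_right_comm, ← sum_add_distrib]
  congr 1
  refine sum_congr rfl fun k _ ↦ ?_
  rw [gaussBinom_succ_succ]
  ring

end GaussBinom

section QPoch

variable {R : Type*} [CommRing R]

/-- The finite `p`-shifted factorial `(a;p)_n`, the `n`-th partial product of `qPochInf a p`. -/
def qPoch (a p : R) (n : ℕ) : R := ∏ k ∈ range n, (1 - a * p ^ k)

@[simp]
lemma qPoch_zero (a p : R) : qPoch a p 0 = 1 := prod_range_zero _

lemma qPoch_succ (a p : R) (n : ℕ) : qPoch a p (n + 1) = qPoch a p n * (1 - a * p ^ n) :=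
  prod_range_succ _ n

lemma qPoch_succ' (a p : R) (n : ℕ) : qPoch a p (n + 1) = (1 - a) * qPoch (a * p) p n := by
  simp [qPoch, prod_range_succ', pow_succ', mul_assoc, mul_comm (1 - a)]

lemma gaussBinom_add_mul_qPoch (p : R) (k l : ℕ) :
    gaussBinom p (k + l) k * (qPoch p p k * qPoch p p l) = qPoch p p (k + l) := by
  induction k generalizing l with
  | zero => simp
  | succ k ihk =>
    induction l with
    | zero => simp
    | succ l ihl =>
      have ihk := ihk (l + 1)
      rw [← add_assoc (k + 1), gaussBinom_succ_succ, qPoch_succ p p (k + 1 + l)]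
      rw [show k + (l + 1) = k + 1 + l by ring] at ihk
      rw [qPoch_succ p p l] at ihk ⊢
      rw [qPoch_succ p p k] at ihl ⊢
      linear_combination p ^ (k + 1) * (1 - p * p ^ l) * ihl + (1 - p * p ^ k) * ihk

theorem qPoch_neg_eq_sum_gaussBinom (x p : R) (n : ℕ) :
    qPoch (-x) p n = ∑ k ∈ range (n + 1), gaussBinom p n k * (p ^ k.choose 2 * x ^ k) := by
  induction n generalizing x with
  | zero => simp
  | succ n ih =>
    rw [qPoch_succ', neg_mul, ih, sum_gaussBinom_succ_mul, mul_sum]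
    refine sum_congr rfl fun k _ ↦ ?_
    rw [Nat.choose_succ_succ' k 1, Nat.choose_one_right]
    ring

end QPoch

lemma sum_Icc_neg_eq_sum_range {M : Type*} [AddCommMonoid M] (f : ℤ → M) (a b : ℕ) :
    ∑ k ∈ Icc (-b : ℤ) a, f k = ∑ j ∈ range (a + b + 1), f (j - b) := by
  have card : ((a : ℤ) + 1 - -b).toNat = a + b + 1 := by lia
  rw [Int.Icc_eq_finset_map, sum_map, card]
  exact sum_congr rfl fun j _ ↦ congrArg f (neg_add_eq_sub _ _)

section Theta

/-- The general term `q ^ k² * z ^ k` of the bilateral theta series. -/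
def thetaTerm {K : Type*} [DivisionRing K] (q z : K) (k : ℤ) : K := q ^ (k ^ 2) * z ^ k

section Field

variable {K : Type*} [Field K]

lemma thetaTerm_natCast (q z : K) (n : ℕ) : thetaTerm q z n = q ^ n ^ 2 * z ^ n := by
  simp only [thetaTerm, zpow_natCast, ← Nat.cast_pow]

lemma thetaTerm_neg (q z : K) (k : ℤ) : thetaTerm q z (-k) = thetaTerm q z⁻¹ k := by
  simp [thetaTerm]

lemma pow_mul_thetaTerm_sub_succ (q : K) {z : K} (hz : z ≠ 0) (j b : ℕ) :
    (q ^ 2) ^ j * thetaTerm q z (j - (b + 1 : ℕ)) =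
      q / z * (q ^ 2) ^ b * thetaTerm q z (j - b) := by
  -- Natural exponents keep the case `q = 0` uniform with the others.
  have zpow_sq (k : ℤ) : q ^ (k ^ 2) = q ^ k.natAbs ^ 2 := by
    rw [← Int.natAbs_sq, ← zpow_natCast, Nat.cast_pow]
  have exponents : 2 * j + ((j : ℤ) - (b + 1 : ℕ)).natAbs ^ 2 =
      1 + 2 * b + ((j : ℤ) - b).natAbs ^ 2 := by
    zify
    simp only [sq_abs]
    ring
  have q_powers : (q ^ 2) ^ j * q ^ ((j : ℤ) - (b + 1 : ℕ)).natAbs ^ 2 =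
      q * (q ^ 2) ^ b * q ^ ((j : ℤ) - b).natAbs ^ 2 := by
    rw [← pow_mul, ← pow_mul, ← pow_add, ← pow_succ', ← pow_add, exponents, add_comm 1]
  have z_powers : z ^ ((j : ℤ) - (b + 1 : ℕ)) = z ^ ((j : ℤ) - b) / z := by
    rw [Nat.cast_succ, ← sub_sub, zpow_sub_one₀ hz, div_eq_mul_inv]
  rw [thetaTerm, thetaTerm, zpow_sq, zpow_sq, z_powers, ← mul_assoc, q_powers]
  ring

lemma qPoch_mul_qPoch_eq_sum_range (q : K) {z : K} (hz : z ≠ 0) (a b : ℕ) :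
    qPoch (-(q * z)) (q ^ 2) a * qPoch (-(q / z)) (q ^ 2) b =
      ∑ j ∈ range (a + b + 1), gaussBinom (q ^ 2) (a + b) j * thetaTerm q z (j - b) := by
  induction b with
  | zero =>
    rw [qPoch_zero, mul_one, add_zero, qPoch_neg_eq_sum_gaussBinom]
    refine sum_congr rfl fun j _ ↦ ?_
    have choose_two : 2 * j.choose 2 + j = j ^ 2 := by
      rw [Nat.choose_two_right, Nat.mul_div_cancel' (Nat.even_mul_pred_self j).two_dvd]
      cases j <;> grind
    rw [Nat.cast_zero, sub_zero, thetaTerm_natCast, ← choose_two]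
    ring
  | succ b ih =>
    rw [qPoch_succ, ← mul_assoc, ih, ← add_assoc, sum_gaussBinom_succ_mul, sum_mul]
    refine sum_congr rfl fun j _ ↦ ?_
    rw [pow_mul_thetaTerm_sub_succ q hz, Nat.cast_succ, Nat.cast_succ, add_sub_add_right_eq_sub]
    ring

theorem qPoch_mul_qPoch_eq_sum_Icc (q : K) {z : K} (hz : z ≠ 0) (a b : ℕ) :
    qPoch (-(q * z)) (q ^ 2) a * qPoch (-(q / z)) (q ^ 2) b =
      ∑ k ∈ Icc (-b : ℤ) a, gaussBinom (q ^ 2) (a + b) (k + b).toNat * thetaTerm q z k := by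
  simp [qPoch_mul_qPoch_eq_sum_range q hz, sum_Icc_neg_eq_sum_range]

end Field

variable {K : Type*} [NormedField K] [CompleteSpace K] {q : K}

lemma summable_thetaTerm_natCast (hq : ‖q‖ < 1) (z : K) :
    Summable fun n : ℕ ↦ thetaTerm q z n := by
  have root_lim : Tendsto (fun n : ℕ ↦ ‖q‖ ^ n * ‖z‖) atTop (𝓝 0) := by
    simpa using (tendsto_pow_atTop_nhds_zero_of_lt_one (norm_nonneg q) hq).mul_const ‖z‖
  refine summable_geometric_two.of_norm_bounded_eventually_nat ?_
  filter_upwards [root_lim.eventually_le_const one_half_pos] with n hn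
  calc ‖thetaTerm q z n‖ = (‖q‖ ^ n * ‖z‖) ^ n := by
        rw [thetaTerm_natCast, norm_mul, norm_pow, norm_pow, mul_pow, ← pow_mul, sq]
    _ ≤ (1 / 2) ^ n := by gcongr

lemma summable_thetaTerm (hq : ‖q‖ < 1) (z : K) : Summable (thetaTerm q z) :=
  .of_nat_of_neg (summable_thetaTerm_natCast hq z) <| by
    simpa only [thetaTerm_neg] using summable_thetaTerm_natCast hq z⁻¹

end Theta

section Limits

variable {p : ℂ}

lemma summable_norm_neg_mul_pow (a : ℂ) (hp : ‖p‖ < 1) :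
    Summable fun k : ℕ ↦ ‖-(a * p ^ k)‖ := by
  simpa only [norm_neg, norm_mul, norm_pow] using
    (summable_geometric_of_lt_one (norm_nonneg p) hp).mul_left ‖a‖

lemma tendsto_qPoch (a : ℂ) (hp : ‖p‖ < 1) :
    Tendsto (qPoch a p) atTop (𝓝 (qPochInf a p)) := by
  have h := (multipliable_one_add_of_summable (summable_norm_neg_mul_pow a hp)).hasProd
  simp only [← sub_eq_add_neg] at h
  exact h.tendsto_prod_nat

lemma one_sub_mul_pow_ne_zero {a : ℂ} (ha : ‖a‖ < 1) (hp : ‖p‖ < 1) (k : ℕ) :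
    1 - a * p ^ k ≠ 0 := by
  refine sub_ne_zero.2 fun h ↦ ?_
  have : ‖a * p ^ k‖ < 1 := by
    rw [norm_mul, norm_pow]
    exact mul_lt_one_of_nonneg_of_lt_one_left (norm_nonneg a) ha
      (pow_le_one₀ (norm_nonneg p) hp.le)
  rw [← h, norm_one] at this
  exact this.false

lemma qPoch_ne_zero {a : ℂ} (ha : ‖a‖ < 1) (hp : ‖p‖ < 1) (n : ℕ) : qPoch a p n ≠ 0 :=
  prod_ne_zero_iff.2 fun k _ ↦ one_sub_mul_pow_ne_zero ha hp k

lemma qPochInf_ne_zero {a : ℂ} (ha : ‖a‖ < 1) (hp : ‖p‖ < 1) : qPochInf a p ≠ 0 := by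
  have h := tprod_one_add_ne_zero_of_summable (f := fun k : ℕ ↦ -(a * p ^ k))
    (fun k ↦ by simpa only [← sub_eq_add_neg] using one_sub_mul_pow_ne_zero ha hp k)
    (summable_norm_neg_mul_pow a hp)
  simpa only [← sub_eq_add_neg, qPochInf] using h

lemma gaussBinom_add_eq_div (hp : ‖p‖ < 1) (k l : ℕ) :
    gaussBinom p (k + l) k = qPoch p p (k + l) / (qPoch p p k * qPoch p p l) :=
  eq_div_of_mul_eq (mul_ne_zero (qPoch_ne_zero hp hp k) (qPoch_ne_zero hp hp l))
    (gaussBinom_add_mul_qPoch p k l)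

lemma exists_norm_gaussBinom_le (hp : ‖p‖ < 1) : ∃ C, ∀ n k, ‖gaussBinom p n k‖ ≤ C := by
  have lim := tendsto_qPoch p hp
  obtain ⟨A, hA⟩ := lim.norm.bddAbove_range
  obtain ⟨B, hB⟩ := (lim.inv₀ (qPochInf_ne_zero hp hp)).norm.bddAbove_range
  replace hA n : ‖qPoch p p n‖ ≤ A := hA ⟨n, rfl⟩
  replace hB n : ‖(qPoch p p n)⁻¹‖ ≤ B := hB ⟨n, rfl⟩
  have hA₀ : 0 ≤ A := (norm_nonneg _).trans (hA 0)
  have hB₀ : 0 ≤ B := (norm_nonneg _).trans (hB 0)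
  refine ⟨A * (B * B), fun n k ↦ ?_⟩
  obtain hnk | hkn := lt_or_ge n k
  · rw [gaussBinom_eq_zero_of_lt p hnk, norm_zero]
    positivity
  · obtain ⟨l, rfl⟩ := Nat.exists_eq_add_of_le hkn
    rw [gaussBinom_add_eq_div hp, div_eq_mul_inv, mul_inv, norm_mul, norm_mul]
    gcongr
    exacts [hA _, hB _, hB _]

lemma tendsto_gaussBinom_add (hp : ‖p‖ < 1) {ι : Type*} {u : Filter ι} {k l : ι → ℕ}
    (hk : Tendsto k u atTop) (hl : Tendsto l u atTop) :
    Tendsto (fun i ↦ gaussBinom p (k i + l i) (k i)) u (𝓝 (qPochInf p p)⁻¹) := by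
  have lim := tendsto_qPoch p hp
  have ne_zero := qPochInf_ne_zero hp hp
  have h := (lim.comp (hk.atTop_add_atTop hl)).div ((lim.comp hk).mul (lim.comp hl))
    (mul_ne_zero ne_zero ne_zero)
  rw [div_mul_cancel_left₀ ne_zero] at h
  exact h.congr fun i ↦ (gaussBinom_add_eq_div hp (k i) (l i)).symm

lemma tendsto_central_gaussBinom (hp : ‖p‖ < 1) (k : ℤ) :
    Tendsto (fun n : ℕ ↦ gaussBinom p (n + n) (k + n).toNat) atTop (𝓝 (qPochInf p p)⁻¹) := by
  have toNat_add (m : ℤ) : Tendsto (fun n : ℕ ↦ (m + n).toNat) atTop atTop :=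
    tendsto_atTop.2 fun b ↦ by
      filter_upwards [eventually_ge_atTop (b + m.natAbs)] with n hn
      lia
  refine (tendsto_gaussBinom_add hp (toNat_add k) (toNat_add (-k))).congr' ?_
  filter_upwards [eventually_ge_atTop k.natAbs] with n hn
  rw [show (k + n).toNat + (-k + n).toNat = n + n by lia]

lemma tendsto_sum_central_gaussBinom_mul (hp : ‖p‖ < 1) {f : ℤ → ℂ} (hf : Summable f) :
    Tendsto (fun n : ℕ ↦ ∑ k ∈ Icc (-n : ℤ) n, gaussBinom p (n + n) (k + n).toNat * f k) atTop
      (𝓝 ((qPochInf p p)⁻¹ * ∑' k, f k)) := by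
  obtain ⟨C, hC⟩ := exists_norm_gaussBinom_le hp
  let F (n : ℕ) : ℤ → ℂ :=
    (Icc (-n : ℤ) n : Set ℤ).indicator fun k ↦ gaussBinom p (n + n) (k + n).toNat * f k
  have lim (k : ℤ) : Tendsto (F · k) atTop (𝓝 ((qPochInf p p)⁻¹ * f k)) := by
    refine ((tendsto_central_gaussBinom hp k).mul_const (f k)).congr' ?_
    filter_upwards [eventually_ge_atTop k.natAbs] with n hn
    have hk : k ∈ Icc (-n : ℤ) n := mem_Icc.2 (by lia)
    simp only [F, Set.indicator_of_mem (mem_coe.2 hk)]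
  have bound (n : ℕ) (k : ℤ) : ‖F n k‖ ≤ C * ‖f k‖ :=
    (norm_indicator_le_norm_self _ _).trans <| by
      rw [norm_mul]
      gcongr
      exact hC _ _
  rw [← tsum_mul_left]
  exact (tendsto_tsum_of_dominated_convergence (hf.norm.mul_left C) lim (.of_forall bound)).congr
    fun n ↦ (sum_eq_tsum_indicator _ _).symm

end Limits

theorem tsum_thetaTerm {q z : ℂ} (hq : ‖q‖ < 1) (hz : z ≠ 0) :
    ∑' k, thetaTerm q z k =
      qPochInf (q ^ 2) (q ^ 2) * qPochInf (-(q * z)) (q ^ 2) * qPochInf (-(q / z)) (q ^ 2) := by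
  have hq2 : ‖q ^ 2‖ < 1 := by
    rw [norm_pow]
    exact pow_lt_one₀ (norm_nonneg q) hq two_ne_zero
  have sum_lim := tendsto_sum_central_gaussBinom_mul hq2 (summable_thetaTerm hq z)
  have prod_lim := (tendsto_qPoch (-(q * z)) hq2).mul (tendsto_qPoch (-(q / z)) hq2)
  have limits_eq := tendsto_nhds_unique sum_lim <|
    prod_lim.congr fun n ↦ qPoch_mul_qPoch_eq_sum_Icc q hz n n
  rw [mul_assoc, ← limits_eq, mul_inv_cancel_left₀ (qPochInf_ne_zero hq2 hq2)]

/-- Jacobi's triple product identity: for `|q| < 1` and `z ≠ 0`,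
`∑_{k=-∞}^∞ q^{k²} z^k = (q²;q²)_∞ (-qz;q²)_∞ (-q/z;q²)_∞`. -/
theorem jacobi_triple_product (q z : ℂ) (hq : ‖q‖ < 1) (hz : z ≠ 0) :
    ∃ S₁ S₂ : ℂ,
      HasSum (fun n : ℕ => q ^ ((n : ℤ) ^ 2) * z ^ (n : ℤ)) S₁ ∧
      HasSum (fun n : ℕ => q ^ ((-(n + 1) : ℤ) ^ 2) * z ^ (-(n + 1) : ℤ)) S₂ ∧
      S₁ + S₂ =
        qPochInf (q ^ 2) (q ^ 2) * qPochInf (-(q * z)) (q ^ 2) *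
          qPochInf (-(q / z)) (q ^ 2) := by
  have summable_nat : Summable fun n : ℕ ↦ thetaTerm q z n := summable_thetaTerm_natCast hq z
  have summable_neg : Summable fun n : ℕ ↦ thetaTerm q z (-(n + 1)) :=
    (summable_thetaTerm hq z).comp_injective fun m n h ↦ by lia
  refine ⟨_, _, summable_nat.hasSum, summable_neg.hasSum, ?_⟩
  rw [← tsum_of_nat_of_neg_add_one summable_nat summable_neg, tsum_thetaTerm hq hz]
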